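/- (Existence and uniqueness) Suppose |f(t,x) − f(t,y)| ≤ κ₃(t)·|x−y| for all t ∈ (a,b) and x, y ∈ ℝ, where κ₃: (a,b) → [0,∞) is measurable with ψ'·κ₃ ∈ L¹(a,b); |𝒢(x) − 𝒢(y)| ≤ κ₄·‖x−y‖ for all x, y ∈ C([a,b],ℝ) with κ₄ ∈ (0,1); 𝒢(0) = 0 or more generally 𝒢: C([a,b],ℝ) → ℝ is given; f(·,u) is measurable for each u ∈ ℝ; and t ↦ ψ'(t)·f(t,0) is in L¹(a,b). If κ₄ + G_max·∫_a^b ψ'(τ)κ₃(τ) dτ < 1, where G_max = L^{α+β−1}/Γ(α+β), then the problem has exactly one mild solution. -/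

import Mathlib

open MeasureTheory Set

/-- The Green function of the sequential fractional boundary value problem. -/
noncomputable def G (a b α β : ℝ) (ψ : ℝ → ℝ) (τ t : ℝ) : ℝ :=
  if τ ≤ t then
    (ψ t - ψ a) ^ β * (ψ b - ψ τ) ^ (α + β - 1) /
        (Real.Gamma (α + β) * (ψ b - ψ a) ^ β) -
      (ψ t - ψ τ) ^ (α + β - 1) / Real.Gamma (α + β)
  else
    (ψ t - ψ a) ^ β * (ψ b - ψ τ) ^ (α + β - 1) /
      (Real.Gamma (α + β) * (ψ b - ψ a) ^ β)

/-- The supremum norm of a function over the interval `[a,b]`. -/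
noncomputable def supNorm (a b : ℝ) (x : ℝ → ℝ) : ℝ :=
  ⨆ t : Set.Icc a b, |x ↑t|

/-!
On `C([a,b])` consider `T x = w · 𝒢 x + H x`, where `w = ((ψ - ψ a) / L)^β` and `H` is the
Hammerstein operator with kernel `G` and nonlinearity `ψ' f`. Both terms of `G` lie between `0` and
`L^(α+β-1) / Γ(α+β)`, so `|G|` is at most this constant, and `|w| ≤ 1`. Hence `T` is Lipschitz with
constant `κ₄ + L^(α+β-1) / Γ(α+β) · ∫ ψ' κ₃ < 1`, and Banach's fixed point theorem applies. The
functional `𝒢` sees only the restriction of its argument to `[a,b]`, by its Lipschitz bound, so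
fixed points of `T` correspond to mild solutions.
-/

section Superposition

variable {Ω X E : Type*} [MeasurableSpace Ω] {μ : Measure Ω} [TopologicalSpace E]
  [TopologicalSpace.PseudoMetrizableSpace E] {g : Ω → X → E}

theorem aestronglyMeasurable_superposition_simpleFunc [MeasurableSpace X]
    (hg : ∀ u, AEStronglyMeasurable (fun τ => g τ u) μ) (s : SimpleFunc Ω X) :
    AEStronglyMeasurable (fun τ => g τ (s τ)) μ := by
  have fibers_cover : ⋃ u : s.range, s ⁻¹' {u.1} = univ :=
    eq_univ_of_forall fun τ => mem_iUnion.2 ⟨⟨s τ, s.mem_range_self τ⟩, rfl⟩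
  rw [← Measure.restrict_univ (μ := μ), ← fibers_cover, aestronglyMeasurable_iUnion_iff]
  rintro ⟨u, -⟩
  refine (hg u).restrict.congr ?_
  filter_upwards [ae_restrict_mem (s.measurableSet_fiber u)] with τ hτ
  rw [show s τ = u from hτ]

theorem aestronglyMeasurable_superposition [TopologicalSpace X]
    (hg : ∀ u, AEStronglyMeasurable (fun τ => g τ u) μ) (hcont : ∀ᵐ τ ∂μ, Continuous (g τ))
    {x : Ω → X} (hx : AEStronglyMeasurable x μ) :
    AEStronglyMeasurable (fun τ => g τ (x τ)) μ := by
  borelize X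
  obtain ⟨x', hx', hxx'⟩ := hx
  have measurable_mk : AEStronglyMeasurable (fun τ => g τ (x' τ)) μ := by
    refine aestronglyMeasurable_of_tendsto_ae Filter.atTop
      (fun n => aestronglyMeasurable_superposition_simpleFunc hg (hx'.approx n)) ?_
    filter_upwards [hcont] with τ hτ
    exact (hτ.tendsto _).comp (hx'.tendsto_approx τ)
  refine measurable_mk.congr ?_
  filter_upwards [hxx'] with τ hτ
  rw [hτ]

end Superposition

section Hammerstein

variable {X E F : Type*} [MeasurableSpace X] [NormedAddCommGroup E] [NormedAddCommGroup F]
  {μ : Measure X} {k : X → X → ℝ} {g : X → E → F} {κ : X → ℝ} {M : ℝ}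

/-- A kernel `k τ t` bounded by `M`, measurable in the integration variable `τ` and continuous in
the free variable `t`. These conditions make integration against `k` a bounded operator from `L¹`
to the continuous functions. -/
structure IsBoundedKernel [TopologicalSpace X] (μ : Measure X) (k : X → X → ℝ) (M : ℝ) : Prop where
  aestronglyMeasurable : ∀ t, AEStronglyMeasurable (fun τ => k τ t) μ
  abs_le : ∀ᵐ τ ∂μ, ∀ t, |k τ t| ≤ M
  continuous : ∀ᵐ τ ∂μ, Continuous (k τ)

/-- A Carathéodory nonlinearity `g τ u` that is Lipschitz in `u` with an `L¹` constant `κ τ`, and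
integrable along `u = 0`. -/
structure IsCaratheodoryLipschitz (μ : Measure X) (g : X → E → F) (κ : X → ℝ) : Prop where
  aestronglyMeasurable : ∀ u, AEStronglyMeasurable (fun τ => g τ u) μ
  integrable_zero : Integrable (fun τ => g τ 0) μ
  integrable_const : Integrable κ μ
  const_nonneg : ∀ᵐ τ ∂μ, 0 ≤ κ τ
  norm_sub_le : ∀ᵐ τ ∂μ, ∀ u v, ‖g τ u - g τ v‖ ≤ κ τ * ‖u - v‖

/-- The Hammerstein integral operator with kernel `k` and nonlinearity `g`. -/
noncomputable def hammerstein [NormedSpace ℝ F] (μ : Measure X) (k : X → X → ℝ) (g : X → E → F)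
    (x : X → E) (t : X) : F :=
  ∫ τ, k τ t • g τ (x τ) ∂μ

theorem IsCaratheodoryLipschitz.ae_continuous (hg : IsCaratheodoryLipschitz μ g κ) :
    ∀ᵐ τ ∂μ, Continuous (g τ) := by
  filter_upwards [hg.norm_sub_le] with τ hτ
  refine (LipschitzWith.of_dist_le' (K := κ τ) fun u v => ?_).continuous
  simpa only [dist_eq_norm] using hτ u v

variable [TopologicalSpace X] [CompactSpace X] [SecondCountableTopology X]
  [OpensMeasurableSpace X]

theorem IsCaratheodoryLipschitz.integrable_superposition (hg : IsCaratheodoryLipschitz μ g κ)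
    (x : C(X, E)) : Integrable (fun τ => g τ (x τ)) μ := by
  refine (hg.integrable_zero.norm.add (hg.integrable_const.mul_const ‖x‖)).mono'
    (aestronglyMeasurable_superposition hg.aestronglyMeasurable hg.ae_continuous
      x.continuous.aestronglyMeasurable) ?_
  filter_upwards [hg.norm_sub_le, hg.const_nonneg] with τ hlip hκ
  calc ‖g τ (x τ)‖ ≤ ‖g τ 0‖ + ‖g τ (x τ) - g τ 0‖ := norm_le_norm_add_norm_sub' _ _
    _ ≤ ‖g τ 0‖ + κ τ * ‖x τ - 0‖ := by gcongr; exact hlip _ _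
    _ ≤ ‖g τ 0‖ + κ τ * ‖x‖ := by rw [sub_zero]; gcongr; exact x.norm_coe_le_norm τ

variable [NormedSpace ℝ F]

theorem integrable_hammerstein (hk : IsBoundedKernel μ k M) (hg : IsCaratheodoryLipschitz μ g κ)
    (x : C(X, E)) (t : X) : Integrable (fun τ => k τ t • g τ (x τ)) μ :=
  (hg.integrable_superposition x).bdd_smul M (hk.aestronglyMeasurable t)
    (hk.abs_le.mono fun _ hτ => hτ t)

theorem continuous_hammerstein (hk : IsBoundedKernel μ k M)
    (hg : IsCaratheodoryLipschitz μ g κ) (x : C(X, E)) : Continuous (hammerstein μ k g x) := by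
  refine continuous_of_dominated (bound := fun τ => M * ‖g τ (x τ)‖)
    (fun t => (integrable_hammerstein hk hg x t).aestronglyMeasurable) (fun t => ?_)
    ((hg.integrable_superposition x).norm.const_mul M) ?_
  · filter_upwards [hk.abs_le] with τ hτ
    rw [norm_smul]
    exact mul_le_mul_of_nonneg_right (hτ t) (norm_nonneg _)
  · filter_upwards [hk.continuous] with τ hτ
    exact hτ.smul continuous_const

theorem norm_hammerstein_sub_le (hk : IsBoundedKernel μ k M)
    (hg : IsCaratheodoryLipschitz μ g κ) (x y : C(X, E)) (t : X) :
    ‖hammerstein μ k g x t - hammerstein μ k g y t‖ ≤ M * (∫ τ, κ τ ∂μ) * dist x y := by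
  rw [hammerstein, hammerstein,
    ← integral_sub (integrable_hammerstein hk hg x t) (integrable_hammerstein hk hg y t),
    ← integral_const_mul, ← integral_mul_const]
  refine norm_integral_le_of_norm_le ((hg.integrable_const.const_mul M).mul_const _) ?_
  filter_upwards [hk.abs_le, hg.const_nonneg, hg.norm_sub_le] with τ hM hκ hlip
  have hM_nonneg : 0 ≤ M := (abs_nonneg _).trans (hM t)
  calc ‖k τ t • g τ (x τ) - k τ t • g τ (y τ)‖ = |k τ t| * ‖g τ (x τ) - g τ (y τ)‖ := by
        rw [← smul_sub, norm_smul, Real.norm_eq_abs]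
    _ ≤ M * (κ τ * ‖x τ - y τ‖) := by gcongr; exacts [hM t, hlip _ _]
    _ ≤ M * (κ τ * dist x y) := by
        gcongr
        exact (dist_eq_norm (x τ) (y τ)).symm.trans_le (ContinuousMap.dist_apply_le_dist τ)
    _ = M * κ τ * dist x y := (mul_assoc _ _ _).symm

theorem existsUnique_eq_add_hammerstein [Nonempty X] [CompleteSpace F] {g : X → F → F}
    (hk : IsBoundedKernel μ k M) (hg : IsCaratheodoryLipschitz μ g κ) {B : C(X, F) → C(X, F)}
    {c : ℝ} (hB : ∀ x y, dist (B x) (B y) ≤ c * dist x y) (hc : c + M * ∫ τ, κ τ ∂μ < 1) :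
    ∃! x : C(X, F), ∀ t, x t = B x t + hammerstein μ k g x t := by
  let J (x : C(X, F)) : C(X, F) := ⟨hammerstein μ k g x, continuous_hammerstein hk hg x⟩
  have dist_J_le (x y : C(X, F)) : dist (J x) (J y) ≤ M * (∫ τ, κ τ ∂μ) * dist x y :=
    ContinuousMap.dist_le_iff_of_nonempty.2 fun t =>
      (dist_eq_norm _ _).trans_le (norm_hammerstein_sub_le hk hg x y t)
  have contracting : ContractingWith (c + M * ∫ τ, κ τ ∂μ).toNNReal fun x => B x + J x := by
    refine ⟨Real.toNNReal_lt_one.2 hc, LipschitzWith.of_dist_le' fun x y => ?_⟩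
    calc dist (B x + J x) (B y + J y) ≤ dist (B x) (B y) + dist (J x) (J y) :=
          dist_add_add_le _ _ _ _
      _ ≤ c * dist x y + M * (∫ τ, κ τ ∂μ) * dist x y := add_le_add (hB x y) (dist_J_le x y)
      _ = (c + M * ∫ τ, κ τ ∂μ) * dist x y := (add_mul _ _ _).symm
  exact ⟨contracting.fixedPoint,
    fun t => (DFunLike.congr_fun contracting.fixedPoint_isFixedPt t).symm,
    fun y hy => contracting.fixedPoint_unique (ContinuousMap.ext fun t => (hy t).symm)⟩

end Hammerstein

section SupNorm

variable {a b : ℝ} {x y : ℝ → ℝ}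

/-- The element of the Banach space `C([a,b])` given by a function on `ℝ` continuous on `[a,b]`. -/
def restrictIcc (x : ℝ → ℝ) (hx : ContinuousOn x (Icc a b)) : C(Icc a b, ℝ) :=
  ⟨(Icc a b).domRestrict x, hx.domRestrict⟩

theorem supNorm_sub_eq_dist (hx : ContinuousOn x (Icc a b)) (hy : ContinuousOn y (Icc a b)) :
    supNorm a b (fun t => x t - y t) = dist (restrictIcc x hx) (restrictIcc y hy) := by
  rw [ContinuousMap.dist_eq_iSup]
  rfl

theorem restrictIcc_IccExtend (hab : a ≤ b) (x : C(Icc a b, ℝ)) :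
    restrictIcc (IccExtend hab x) x.continuous.Icc_extend'.continuousOn = x :=
  ContinuousMap.ext fun t => IccExtend_val hab x t

end SupNorm

section Icc

variable {a b : ℝ}

theorem measurePreserving_coe_Icc :
    MeasurePreserving ((↑) : Icc a b → ℝ) (volume.comap Subtype.val)
      (volume.restrict (Ioo a b)) := by
  rw [restrict_Ioo_eq_restrict_Icc]
  exact measurePreserving_subtype_coe measurableSet_Icc

theorem intervalIntegral_eq_integral_Icc {E : Type*} [NormedAddCommGroup E] [NormedSpace ℝ E]
    (hab : a ≤ b) (h : ℝ → E) :
    ∫ τ in a..b, h τ = ∫ τ : Icc a b, h τ ∂(volume.comap Subtype.val) := by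
  rw [intervalIntegral.integral_of_le hab, ← integral_Icc_eq_integral_Ioc,
    integral_subtype_comap measurableSet_Icc]

theorem integrable_Icc_of_intervalIntegrable {E : Type*} [NormedAddCommGroup E] {h : ℝ → E}
    (hab : a ≤ b) (hh : IntervalIntegrable h volume a b) :
    Integrable (fun τ : Icc a b => h τ) (volume.comap Subtype.val) :=
  measurePreserving_coe_Icc.integrable_comp_of_integrable
    ((intervalIntegrable_iff_integrableOn_Ioo_of_le hab).1 hh)

theorem ae_Icc_of_forall_Ioo {p : ℝ → Prop} (hp : ∀ τ ∈ Ioo a b, p τ) :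
    ∀ᵐ τ : Icc a b ∂(volume.comap Subtype.val), p τ :=
  measurePreserving_coe_Icc.quasiMeasurePreserving.ae
    (ae_restrict_of_forall_mem measurableSet_Ioo hp)

end Icc

section Green

variable {a b α β : ℝ} {ψ : ℝ → ℝ}

theorem abs_G_le (hβ : 0 ≤ β) (hαβ : 1 ≤ α + β) (hψ : MonotoneOn ψ (Icc a b)) (hψ_lt : ψ a < ψ b)
    {τ t : ℝ} (hτ : τ ∈ Icc a b) (ht : t ∈ Icc a b) :
    |G a b α β ψ τ t| ≤ (ψ b - ψ a) ^ (α + β - 1) / Real.Gamma (α + β) := by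
  have ha : a ∈ Icc a b := left_mem_Icc.2 (ht.1.trans ht.2)
  have hb : b ∈ Icc a b := right_mem_Icc.2 (ht.1.trans ht.2)
  have : 0 < Real.Gamma (α + β) := Real.Gamma_pos_of_pos (by linarith)
  have hL : 0 < (ψ b - ψ a) ^ β := Real.rpow_pos_of_pos (sub_pos.2 hψ_lt) _
  have hat : 0 ≤ ψ t - ψ a := sub_nonneg.2 (hψ ha ht ht.1)
  have hτb : 0 ≤ ψ b - ψ τ := sub_nonneg.2 (hψ hτ hb hτ.2)
  have first_nonneg : 0 ≤ (ψ t - ψ a) ^ β * (ψ b - ψ τ) ^ (α + β - 1) /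
      (Real.Gamma (α + β) * (ψ b - ψ a) ^ β) := by positivity
  have first_le : (ψ t - ψ a) ^ β * (ψ b - ψ τ) ^ (α + β - 1) /
      (Real.Gamma (α + β) * (ψ b - ψ a) ^ β) ≤
      (ψ b - ψ a) ^ (α + β - 1) / Real.Gamma (α + β) := by
    calc _ ≤ (ψ b - ψ a) ^ β * (ψ b - ψ a) ^ (α + β - 1) /
          (Real.Gamma (α + β) * (ψ b - ψ a) ^ β) := by
          gcongr
          exacts [hψ ht hb ht.2, hψ ha hτ hτ.1]
      _ = _ := by field_simp
  unfold G
  split_ifs with hτt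
  · have hτt' : 0 ≤ ψ t - ψ τ := sub_nonneg.2 (hψ hτ ht hτt)
    refine abs_sub_le_of_nonneg_of_le first_nonneg first_le (by positivity) ?_
    gcongr
    exacts [hψ ht hb ht.2, hψ ha hτ hτ.1]
  · rwa [abs_of_nonneg first_nonneg]

-- The truncated power vanishes for `t ≤ τ` because its exponent is positive, so a single continuous
-- formula covers both branches.
theorem G_eq_sub_max (hαβ : 1 < α + β) (hψ : MonotoneOn ψ (Icc a b)) {τ t : ℝ}
    (hτ : τ ∈ Icc a b) (ht : t ∈ Icc a b) :
    G a b α β ψ τ t =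
      (ψ t - ψ a) ^ β * (ψ b - ψ τ) ^ (α + β - 1) / (Real.Gamma (α + β) * (ψ b - ψ a) ^ β) -
        max (ψ t - ψ τ) 0 ^ (α + β - 1) / Real.Gamma (α + β) := by
  unfold G
  split_ifs with hτt
  · rw [max_eq_left (sub_nonneg.2 (hψ hτ ht hτt))]
  · rw [max_eq_right (sub_nonpos.2 (hψ ht hτ (not_le.1 hτt).le)),
      Real.zero_rpow (sub_pos.2 hαβ).ne', zero_div, sub_zero]

theorem continuous_G (hβ : 0 ≤ β) (hαβ : 1 < α + β) (hψ_cont : ContinuousOn ψ (Icc a b))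
    (hψ : MonotoneOn ψ (Icc a b)) :
    Continuous fun p : Icc a b × Icc a b => G a b α β ψ p.1 p.2 := by
  have hγ : 0 ≤ α + β - 1 := (sub_pos.2 hαβ).le
  have hfst : Continuous fun p : Icc a b × Icc a b => ψ p.1 :=
    hψ_cont.domRestrict.comp continuous_fst
  have hsnd : Continuous fun p : Icc a b × Icc a b => ψ p.2 :=
    hψ_cont.domRestrict.comp continuous_snd
  simp only [fun p : Icc a b × Icc a b => G_eq_sub_max (α := α) (β := β) hαβ hψ p.1.2 p.2.2]
  exact ((((hsnd.sub continuous_const).rpow_const fun _ => .inr hβ).mul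
    ((continuous_const.sub hfst).rpow_const fun _ => .inr hγ)).div_const _).sub
    ((((hsnd.sub hfst).max continuous_const).rpow_const fun _ => .inr hγ).div_const _)

theorem isBoundedKernel_G (hβ : 0 ≤ β) (hαβ : 1 < α + β) (hψ_cont : ContinuousOn ψ (Icc a b))
    (hψ : MonotoneOn ψ (Icc a b)) (hψ_lt : ψ a < ψ b) (μ : Measure (Icc a b)) :
    IsBoundedKernel μ (fun τ t => G a b α β ψ τ t)
      ((ψ b - ψ a) ^ (α + β - 1) / Real.Gamma (α + β)) where
  aestronglyMeasurable t :=
    ((continuous_G hβ hαβ hψ_cont hψ).comp (.prodMk_left t)).aestronglyMeasurable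
  abs_le := .of_forall fun τ t => abs_G_le hβ hαβ.le hψ hψ_lt τ.2 t.2
  continuous := .of_forall fun τ => (continuous_G hβ hαβ hψ_cont hψ).comp (.prodMk_right τ)

end Green

section BoundaryWeight

variable {a b β : ℝ} {ψ : ℝ → ℝ}

/-- The coefficient of the nonlocal boundary value in the equation for mild solutions. It increases
from `0` at `a` to `1` at `b`. -/
noncomputable def boundaryWeight (a b β : ℝ) (ψ : ℝ → ℝ) (t : ℝ) : ℝ :=
  ((ψ t - ψ a) / (ψ b - ψ a)) ^ β

theorem continuousOn_boundaryWeight (hβ : 0 ≤ β) (hψ_cont : ContinuousOn ψ (Icc a b)) :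
    ContinuousOn (boundaryWeight a b β ψ) (Icc a b) :=
  ((hψ_cont.sub continuousOn_const).div_const _).rpow_const fun _ _ => .inr hβ

theorem abs_boundaryWeight_le_one (hβ : 0 ≤ β) (hψ : MonotoneOn ψ (Icc a b)) {t : ℝ}
    (ht : t ∈ Icc a b) : |boundaryWeight a b β ψ t| ≤ 1 := by
  have hat : ψ a ≤ ψ t := hψ (left_mem_Icc.2 (ht.1.trans ht.2)) ht ht.1
  have htb : ψ t ≤ ψ b := hψ ht (right_mem_Icc.2 (ht.1.trans ht.2)) ht.2
  have ratio_nonneg : 0 ≤ (ψ t - ψ a) / (ψ b - ψ a) :=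
    div_nonneg (sub_nonneg.2 hat) (sub_nonneg.2 (hat.trans htb))
  have ratio_le_one : (ψ t - ψ a) / (ψ b - ψ a) ≤ 1 :=
    div_le_one_of_le₀ (sub_le_sub_right htb _) (sub_nonneg.2 (hat.trans htb))
  rw [boundaryWeight, abs_of_nonneg (Real.rpow_nonneg ratio_nonneg _)]
  exact Real.rpow_le_one ratio_nonneg ratio_le_one hβ

end BoundaryWeight

section Nonlocal

variable {a b c : ℝ} {𝒢 : (ℝ → ℝ) → ℝ}

/-- Lipschitz continuity of a functional with constant `c` in the supremum norm over `[a,b]`,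
required only between functions continuous on `[a,b]`. -/
def SupNormLipschitz (a b c : ℝ) (𝒢 : (ℝ → ℝ) → ℝ) : Prop :=
  ∀ x y : ℝ → ℝ, ContinuousOn x (Icc a b) → ContinuousOn y (Icc a b) →
    |𝒢 x - 𝒢 y| ≤ c * supNorm a b (fun t => x t - y t)

/-- The operator `x ↦ 𝒢 x • w` on `C([a,b])`. As `𝒢` takes functions on `ℝ`, it is evaluated at the
extension of `x` by constants outside `[a,b]`. -/
noncomputable def boundaryTerm (hab : a ≤ b) (w : C(Icc a b, ℝ)) (𝒢 : (ℝ → ℝ) → ℝ)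
    (x : C(Icc a b, ℝ)) : C(Icc a b, ℝ) :=
  𝒢 (IccExtend hab x) • w

theorem SupNormLipschitz.eq_of_eqOn (h𝒢 : SupNormLipschitz a b c 𝒢) {x y : ℝ → ℝ}
    (hx : ContinuousOn x (Icc a b)) (hxy : EqOn x y (Icc a b)) : 𝒢 x = 𝒢 y := by
  have hy : ContinuousOn y (Icc a b) := hx.congr hxy.symm
  have restrict_eq : restrictIcc x hx = restrictIcc y hy :=
    ContinuousMap.ext fun t => hxy t.2
  have abs_sub_le_zero := h𝒢 x y hx hy
  rw [supNorm_sub_eq_dist hx hy, restrict_eq, dist_self, mul_zero] at abs_sub_le_zero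
  exact sub_eq_zero.1 (abs_nonpos_iff.1 abs_sub_le_zero)

theorem dist_boundaryTerm_le (hab : a ≤ b) {w : C(Icc a b, ℝ)} (hw : ∀ t, |w t| ≤ 1)
    (h𝒢 : SupNormLipschitz a b c 𝒢) (x y : C(Icc a b, ℝ)) :
    dist (boundaryTerm hab w 𝒢 x) (boundaryTerm hab w 𝒢 y) ≤ c * dist x y := by
  have : Nonempty (Icc a b) := (nonempty_Icc.2 hab).to_subtype
  have hx := x.continuous.Icc_extend' (h := hab)
  have hy := y.continuous.Icc_extend' (h := hab)
  refine ContinuousMap.dist_le_iff_of_nonempty.2 fun t => ?_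
  calc |𝒢 (IccExtend hab x) * w t - 𝒢 (IccExtend hab y) * w t|
      = |𝒢 (IccExtend hab x) - 𝒢 (IccExtend hab y)| * |w t| := by rw [← sub_mul, abs_mul]
    _ ≤ |𝒢 (IccExtend hab x) - 𝒢 (IccExtend hab y)| :=
        mul_le_of_le_one_right (abs_nonneg _) (hw t)
    _ ≤ c * supNorm a b (fun t => IccExtend hab x t - IccExtend hab y t) :=
        h𝒢 _ _ hx.continuousOn hy.continuousOn
    _ = c * dist x y := by
        rw [supNorm_sub_eq_dist hx.continuousOn hy.continuousOn, restrictIcc_IccExtend,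
          restrictIcc_IccExtend]

theorem forall_Icc_eq_iff_restrictIcc_eq (hab : a ≤ b) (h𝒢 : SupNormLipschitz a b c 𝒢)
    {w : ℝ → ℝ} (hw : ContinuousOn w (Icc a b)) (K g : ℝ → ℝ → ℝ) {y : ℝ → ℝ}
    (hy : ContinuousOn y (Icc a b)) :
    (∀ t ∈ Icc a b, y t = w t * 𝒢 y + ∫ τ in a..b, K τ t * g τ (y τ)) ↔
      ∀ t, restrictIcc y hy t = boundaryTerm hab (restrictIcc w hw) 𝒢 (restrictIcc y hy) t +
        hammerstein (volume.comap Subtype.val) (fun τ t => K τ t) (fun τ => g τ)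
          (restrictIcc y hy) t := by
  have h𝒢y : 𝒢 (IccExtend hab (restrictIcc y hy)) = 𝒢 y :=
    (h𝒢.eq_of_eqOn hy fun _ ht => (IccExtend_of_mem hab (restrictIcc y hy) ht).symm).symm
  refine Subtype.forall'.trans (forall_congr' fun t => ?_)
  rw [intervalIntegral_eq_integral_Icc hab, mul_comm, ← h𝒢y]
  rfl

theorem exists_unique_hammerstein_nonlocal (hab : a ≤ b) {w : ℝ → ℝ}
    (hw : ContinuousOn w (Icc a b)) (hw_le : ∀ t ∈ Icc a b, |w t| ≤ 1)
    (h𝒢 : SupNormLipschitz a b c 𝒢)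
    {K g : ℝ → ℝ → ℝ} {κ : ℝ → ℝ} {M : ℝ}
    (hK : IsBoundedKernel (volume.comap Subtype.val) (fun τ t : Icc a b => K τ t) M)
    (hg : IsCaratheodoryLipschitz (volume.comap Subtype.val) (fun τ : Icc a b => g τ)
      (fun τ => κ τ))
    (hc : c + M * ∫ τ in a..b, κ τ < 1) :
    ∃ x : ℝ → ℝ, (ContinuousOn x (Icc a b) ∧
      ∀ t ∈ Icc a b, x t = w t * 𝒢 x + ∫ τ in a..b, K τ t * g τ (x τ)) ∧
      ∀ y : ℝ → ℝ, ContinuousOn y (Icc a b) →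
        (∀ t ∈ Icc a b, y t = w t * 𝒢 y + ∫ τ in a..b, K τ t * g τ (y τ)) →
        ∀ t ∈ Icc a b, y t = x t := by
  have : Nonempty (Icc a b) := (nonempty_Icc.2 hab).to_subtype
  rw [intervalIntegral_eq_integral_Icc hab] at hc
  obtain ⟨x, hx, x_unique⟩ := existsUnique_eq_add_hammerstein hK hg
    (dist_boundaryTerm_le hab (w := restrictIcc w hw) (fun t => hw_le t t.2) h𝒢) hc
  refine ⟨IccExtend hab x, ⟨x.continuous.Icc_extend'.continuousOn, ?_⟩, fun y hy hsol t ht => ?_⟩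
  · rw [forall_Icc_eq_iff_restrictIcc_eq hab h𝒢 hw K g x.continuous.Icc_extend'.continuousOn,
      restrictIcc_IccExtend]
    exact hx
  · have restrict_eq : restrictIcc y hy = x :=
      x_unique _ ((forall_Icc_eq_iff_restrictIcc_eq hab h𝒢 hw K g hy).1 hsol)
    rw [IccExtend_of_mem hab x ht, ← restrict_eq]
    rfl

end Nonlocal

section MildSolution

variable {a b : ℝ}

theorem aestronglyMeasurable_of_hasDerivAt {s : Set ℝ} (hs : MeasurableSet s) {ψ ψd : ℝ → ℝ}
    (hψ : ∀ t ∈ s, HasDerivAt ψ (ψd t) t) : AEStronglyMeasurable ψd (volume.restrict s) :=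
  (measurable_deriv ψ).aestronglyMeasurable.congr
    (ae_restrict_of_forall_mem hs fun t ht => (hψ t ht).deriv)

theorem strictMonoOn_of_hasDerivAt_pos {s : Set ℝ} (hs : Convex ℝ s) {ψ ψd : ℝ → ℝ}
    (hψ : ∀ t ∈ s, HasDerivAt ψ (ψd t) t) (hψd_pos : ∀ t ∈ s, 0 < ψd t) : StrictMonoOn ψ s :=
  strictMonoOn_of_hasDerivWithinAt_pos hs (HasDerivAt.continuousOn hψ)
    (fun t ht => (hψ t (interior_subset ht)).hasDerivWithinAt)
    fun t ht => hψd_pos t (interior_subset ht)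

theorem isCaratheodoryLipschitz_mul (hab : a ≤ b) {p κ : ℝ → ℝ} {f : ℝ → ℝ → ℝ}
    (hp_meas : AEStronglyMeasurable p (volume.restrict (Ioo a b)))
    (hp_nonneg : ∀ t ∈ Ioo a b, 0 ≤ p t) (hκ_nonneg : ∀ t ∈ Ioo a b, 0 ≤ κ t)
    (hκ_int : IntervalIntegrable (fun t => p t * κ t) volume a b)
    (hf_lip : ∀ t ∈ Ioo a b, ∀ u v : ℝ, |f t u - f t v| ≤ κ t * |u - v|)
    (hf_meas : ∀ u : ℝ, AEStronglyMeasurable (fun t => f t u) (volume.restrict (Ioo a b)))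
    (hf0_int : IntervalIntegrable (fun t => p t * f t 0) volume a b) :
    IsCaratheodoryLipschitz (volume.comap Subtype.val) (fun (τ : Icc a b) u => p τ * f τ u)
      (fun τ => p τ * κ τ) where
  aestronglyMeasurable u :=
    (hp_meas.mul (hf_meas u)).comp_measurePreserving measurePreserving_coe_Icc
  integrable_zero := integrable_Icc_of_intervalIntegrable hab hf0_int
  integrable_const := integrable_Icc_of_intervalIntegrable hab hκ_int
  const_nonneg := ae_Icc_of_forall_Ioo fun t ht => mul_nonneg (hp_nonneg t ht) (hκ_nonneg t ht)
  norm_sub_le := by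
    refine ae_Icc_of_forall_Ioo
      (p := fun t => ∀ u v, ‖p t * f t u - p t * f t v‖ ≤ p t * κ t * ‖u - v‖) fun t ht u v => ?_
    rw [← mul_sub, norm_mul, Real.norm_of_nonneg (hp_nonneg t ht), mul_assoc]
    exact mul_le_mul_of_nonneg_left (hf_lip t ht u v) (hp_nonneg t ht)

theorem existence_and_uniqueness_of_mild_solution_general
    {α β κ₄ : ℝ} (hab : a ≤ b) (hβ : 0 < β) (hαβ : 1 < α + β) {ψ ψd : ℝ → ℝ}
    (hψ_cont : ContinuousOn ψ (Icc a b)) (hψ : ∀ t ∈ Ioo a b, HasDerivAt ψ (ψd t) t)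
    (hψd_nonneg : ∀ t ∈ Ioo a b, 0 ≤ ψd t) (hψ_lt : ψ a < ψ b)
    {f : ℝ → ℝ → ℝ} {𝒢 : (ℝ → ℝ) → ℝ} {κ₃ : ℝ → ℝ} (hκ₃_nonneg : ∀ t ∈ Ioo a b, 0 ≤ κ₃ t)
    (hκ₃_int : IntervalIntegrable (fun t => ψd t * κ₃ t) volume a b)
    (hf_lip : ∀ t ∈ Ioo a b, ∀ u v : ℝ, |f t u - f t v| ≤ κ₃ t * |u - v|)
    (h𝒢_lip : ∀ x y : ℝ → ℝ, ContinuousOn x (Icc a b) → ContinuousOn y (Icc a b) →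
      |𝒢 x - 𝒢 y| ≤ κ₄ * supNorm a b (fun t => x t - y t))
    (hf_meas : ∀ u : ℝ, AEStronglyMeasurable (fun t => f t u) (volume.restrict (Ioo a b)))
    (hf0_int : IntervalIntegrable (fun t => ψd t * f t 0) volume a b)
    (hcontraction : κ₄ + (ψ b - ψ a) ^ (α + β - 1) / Real.Gamma (α + β) *
      (∫ τ in a..b, ψd τ * κ₃ τ) < 1) :
    ∃ x : ℝ → ℝ, (ContinuousOn x (Icc a b) ∧
      ∀ t ∈ Icc a b,
        x t = ((ψ t - ψ a) / (ψ b - ψ a)) ^ β * 𝒢 x +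
          ∫ τ in a..b, G a b α β ψ τ t * ψd τ * f τ (x τ)) ∧
      ∀ y : ℝ → ℝ, ContinuousOn y (Icc a b) →
        (∀ t ∈ Icc a b,
          y t = ((ψ t - ψ a) / (ψ b - ψ a)) ^ β * 𝒢 y +
            ∫ τ in a..b, G a b α β ψ τ t * ψd τ * f τ (y τ)) →
        ∀ t ∈ Icc a b, y t = x t := by
  have hψ_mono : MonotoneOn ψ (Icc a b) := by
    refine monotoneOn_of_hasDerivWithinAt_nonneg (convex_Icc a b) hψ_cont (f' := ψd) ?_ ?_ <;>
      rw [interior_Icc]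
    exacts [fun t ht => (hψ t ht).hasDerivWithinAt, hψd_nonneg]
  have hψd_meas := aestronglyMeasurable_of_hasDerivAt measurableSet_Ioo hψ
  simp only [mul_assoc (G _ _ _ _ _ _ _)]
  exact exists_unique_hammerstein_nonlocal (g := fun τ u => ψd τ * f τ u)
    hab (continuousOn_boundaryWeight hβ.le hψ_cont)
    (fun t ht => abs_boundaryWeight_le_one hβ.le hψ_mono ht) h𝒢_lip
    (isBoundedKernel_G hβ.le hαβ hψ_cont hψ_mono hψ_lt _)
    (isCaratheodoryLipschitz_mul hab hψd_meas hψd_nonneg hκ₃_nonneg hκ₃_int hf_lip hf_meas hf0_int)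
    hcontraction

end MildSolution

theorem existence_and_uniqueness_of_mild_solution
    (a b α β κ₄ : ℝ) (hab : a < b)
    (hα0 : 0 < α) (hα1 : α ≤ 1) (hβ0 : 0 < β) (hβ1 : β ≤ 1) (hαβ : 1 < α + β)
    (ψ ψd : ℝ → ℝ)
    (hψ : ∀ t ∈ Set.Icc a b, HasDerivAt ψ (ψd t) t)
    (hψd_cont : ContinuousOn ψd (Set.Icc a b))
    (hψd_pos : ∀ t ∈ Set.Icc a b, 0 < ψd t)
    (f : ℝ → ℝ → ℝ) (𝒢 : (ℝ → ℝ) → ℝ) (κ₃ : ℝ → ℝ)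
    (hκ₃_meas : AEStronglyMeasurable κ₃ (volume.restrict (Set.Ioo a b)))
    (hκ₃_nonneg : ∀ t ∈ Set.Ioo a b, 0 ≤ κ₃ t)
    (hκ₃_int : IntervalIntegrable (fun t => ψd t * κ₃ t) volume a b)
    (hf_lip : ∀ t ∈ Set.Ioo a b, ∀ u v : ℝ, |f t u - f t v| ≤ κ₃ t * |u - v|)
    (hκ₄0 : 0 < κ₄) (hκ₄1 : κ₄ < 1)
    (h𝒢_lip : ∀ x y : ℝ → ℝ, ContinuousOn x (Set.Icc a b) →
      ContinuousOn y (Set.Icc a b) →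
      |𝒢 x - 𝒢 y| ≤ κ₄ * supNorm a b (fun t => x t - y t))
    (hf_meas : ∀ u : ℝ,
      AEStronglyMeasurable (fun t => f t u) (volume.restrict (Set.Ioo a b)))
    (hf0_int : IntervalIntegrable (fun t => ψd t * f t 0) volume a b)
    (hcontraction : κ₄ + (ψ b - ψ a) ^ (α + β - 1) / Real.Gamma (α + β) *
      (∫ τ in a..b, ψd τ * κ₃ τ) < 1) :
    ∃ x : ℝ → ℝ, (ContinuousOn x (Set.Icc a b) ∧
      ∀ t ∈ Set.Icc a b,
        x t = ((ψ t - ψ a) / (ψ b - ψ a)) ^ β * 𝒢 x +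
          ∫ τ in a..b, G a b α β ψ τ t * ψd τ * f τ (x τ)) ∧
      ∀ y : ℝ → ℝ, ContinuousOn y (Set.Icc a b) →
        (∀ t ∈ Set.Icc a b,
          y t = ((ψ t - ψ a) / (ψ b - ψ a)) ^ β * 𝒢 y +
            ∫ τ in a..b, G a b α β ψ τ t * ψd τ * f τ (y τ)) →
        ∀ t ∈ Set.Icc a b, y t = x t :=
  existence_and_uniqueness_of_mild_solution_general hab.le hβ0 hαβ (HasDerivAt.continuousOn hψ)
    (fun t ht => hψ t (Ioo_subset_Icc_self ht))
    (fun t ht => (hψd_pos t (Ioo_subset_Icc_self ht)).le)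
    (strictMonoOn_of_hasDerivAt_pos (convex_Icc a b) hψ hψd_pos (left_mem_Icc.2 hab.le)
      (right_mem_Icc.2 hab.le) hab)
    hκ₃_nonneg hκ₃_int hf_lip h𝒢_lip hf_meas hf0_int hcontraction
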